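/- arXiv:2104.13512 — 2 statements merged into one kernel-verified Lean document; each statement's English description precedes it below -/
import Mathlib

section
/- The number of pairs (σ₁, σ₂) of permutations in S_5 with σ₁σ₂ = (1,2,3,4,5), σ₂ a single 5-cycle, and σ₁ having exactly 3 cycles, equals 15. -/
open Equiv Finset

/-- The set of cycles (orbits, including fixed points as singletons) of a permutation. -/
def cyclesOf {n : ℕ} (σ : Equiv.Perm (Fin n)) : Finset (Finset (Fin n)) :=
  Finset.univ.image fun x => Finset.univ.filter fun y => σ.SameCycle x y

/-- The number of cycles of a permutation, counting fixed points as cycles. -/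
def cycleCount {n : ℕ} (σ : Equiv.Perm (Fin n)) : ℕ := (cyclesOf σ).card

/-- Two points lie on one cycle of `σ` iff one of the first five iterates links them. -/
theorem sameCycle_iff_five (σ : Equiv.Perm (Fin 5)) (x y : Fin 5) :
    σ.SameCycle x y ↔
      (y = x ∨ y = σ x ∨ y = σ (σ x) ∨ y = σ (σ (σ x)) ∨ y = σ (σ (σ (σ x)))) := by
  constructor
  · intro h
    by_cases hx : σ x = x
    · left
      exact (h.eq_of_left hx).symm
    · obtain ⟨i, hi, rfl⟩ := Equiv.Perm.SameCycle.exists_pow_eq_of_mem_support h (by simpa using hx)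
      have h5 : (σ.cycleOf x).support.card ≤ 5 := by
        simpa using Finset.card_le_univ (σ.cycleOf x).support
      have : i < 5 := by omega
      interval_cases i <;> simp [pow_succ]
  · rintro (rfl | rfl | rfl | rfl | rfl)
    · exact Equiv.Perm.SameCycle.refl _ _
    · exact ⟨1, by simp⟩
    · exact ⟨2, rfl⟩
    · exact ⟨3, rfl⟩
    · exact ⟨4, rfl⟩

/-- A point is minimal on its cycle. -/
def isCycleMin (σ : Equiv.Perm (Fin 5)) (x : Fin 5) : Bool :=
  let a := σ x
  let b := σ a
  let c := σ b
  let d := σ c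
  Nat.ble x.val a.val && Nat.ble x.val b.val && Nat.ble x.val c.val && Nat.ble x.val d.val

theorem isCycleMin_iff (σ : Equiv.Perm (Fin 5)) (x : Fin 5) :
    isCycleMin σ x = true ↔ ∀ y, σ.SameCycle x y → x ≤ y := by
  simp only [sameCycle_iff_five, isCycleMin, Bool.and_eq_true, Nat.ble_eq, Fin.val_fin_le]
  constructor
  · rintro ⟨⟨⟨h1, h2⟩, h3⟩, h4⟩ y (rfl | rfl | rfl | rfl | rfl) <;> first | exact le_rfl | assumption
  · intro h
    exact ⟨⟨⟨h _ (by simp), h _ (by simp)⟩, h _ (by simp)⟩, h _ (by simp)⟩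

/-- Cycles are counted by their minimal elements. -/
theorem cycleCount_eq_min (σ : Equiv.Perm (Fin 5)) :
    cycleCount σ = (Finset.univ.filter fun x => isCycleMin σ x = true).card := by
  unfold cycleCount cyclesOf
  symm
  apply Finset.card_bij (fun x _ => Finset.univ.filter fun y => σ.SameCycle x y)
  · intro x _
    exact Finset.mem_image_of_mem _ (Finset.mem_univ _)
  · intro x hx y hy hxy
    simp only [Finset.mem_filter, Finset.mem_univ, true_and, isCycleMin_iff] at hx hy
    have h : σ.SameCycle x y := by
      have : y ∈ Finset.univ.filter fun z => σ.SameCycle x z := by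
        rw [hxy]; simp [Equiv.Perm.SameCycle.refl]
      simpa using this
    exact le_antisymm (hx _ h) (hy _ h.symm)
  · intro s hs
    obtain ⟨x, -, rfl⟩ := Finset.mem_image.1 hs
    obtain ⟨m, hm, hmin⟩ := Finset.exists_min_image
      (Finset.univ.filter fun y => σ.SameCycle x y) id ⟨x, by simp [Equiv.Perm.SameCycle.refl]⟩
    simp only [Finset.mem_filter, Finset.mem_univ, true_and, id] at hm hmin
    refine ⟨m, ?_, ?_⟩
    · simp only [Finset.mem_filter, Finset.mem_univ, true_and, isCycleMin_iff]
      exact fun y hy => hmin y (hm.trans hy)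
    · ext y
      simp only [Finset.mem_filter, Finset.mem_univ, true_and]
      exact ⟨fun h => hm.trans h, fun h => hm.symm.trans h⟩

set_option linter.constructorNameAsVariable false in
/-- The first factor is determined by the second. -/
theorem card_pairs_eq :
    ((Finset.univ : Finset (Equiv.Perm (Fin 5) × Equiv.Perm (Fin 5))).filter fun p =>
      p.1 * p.2 = finRotate 5 ∧ cycleCount p.2 = 1 ∧ cycleCount p.1 = 3).card =
    ((Finset.univ : Finset (Equiv.Perm (Fin 5))).filter fun σ =>
      (Finset.univ.filter fun x => isCycleMin σ x = true).card = 1 ∧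
      (Finset.univ.filter fun x => isCycleMin (finRotate 5 * σ⁻¹) x = true).card = 3).card := by
  simp only [← cycleCount_eq_min]
  apply Finset.card_bij (fun p _ => p.2)
  · rintro ⟨a, b⟩ h
    simp only [Finset.mem_filter, Finset.mem_univ, true_and] at h ⊢
    rw [← h.1, mul_inv_cancel_right]
    exact h.2
  · rintro ⟨a, b⟩ h ⟨a2, b2⟩ k rfl
    simp only [Finset.mem_filter, Finset.mem_univ, true_and] at h k
    rw [mul_right_cancel (h.1.trans k.1.symm)]
  · intro b hb
    simp only [Finset.mem_filter, Finset.mem_univ, true_and] at hb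
    exact ⟨(finRotate 5 * b⁻¹, b), by simpa using hb, rfl⟩

/-- The number of pairs `(σ₁, σ₂)` of permutations of `{1,…,5}` with `σ₁σ₂ = (1,2,3,4,5)`,
`σ₂` a single 5-cycle, and `σ₁` having exactly three cycles, is `15`. -/
theorem count_pairs_S5_three_cycles :
    ((Finset.univ : Finset (Equiv.Perm (Fin 5) × Equiv.Perm (Fin 5))).filter fun p =>
      p.1 * p.2 = finRotate 5 ∧ cycleCount p.2 = 1 ∧ cycleCount p.1 = 3).card = 15 := by
  rw [card_pairs_eq]
  decide +kernel
end

section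
/- The number of triples (σ₁, σ₂, q) where σ₁, σ₂ ∈ S_5, σ₁σ₂ = (1,2,3,4,5), σ₁ has exactly 2 cycles, σ₂ has exactly 2 cycles, q is a bijection from the cycles of σ₁ to {2,2} (both labels equal 2), and each cycle c of σ₁ intersects nontrivially at least q(c) = 2 cycles of σ₂, equals 10. -/
open Equiv Finset

/-- The condition on the pair. -/
def GoodPair (p : Equiv.Perm (Fin 5) × Equiv.Perm (Fin 5)) : Prop :=
  p.1 * p.2 = finRotate 5 ∧ cycleCount p.1 = 2 ∧ cycleCount p.2 = 2 ∧
    ∀ c ∈ cyclesOf p.1, 2 ≤ ((cyclesOf p.2).filter fun c' => (c ∩ c').Nonempty).card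

instance : DecidablePred GoodPair := fun p =>
  inferInstanceAs (Decidable (p.1 * p.2 = finRotate 5 ∧ cycleCount p.1 = 2 ∧ cycleCount p.2 = 2 ∧
    ∀ c ∈ cyclesOf p.1, 2 ≤ ((cyclesOf p.2).filter fun c' => (c ∩ c').Nonempty).card))

theorem good_count_first :
    ((Finset.univ : Finset (Equiv.Perm (Fin 5))).filter
      fun s => GoodPair (s, s⁻¹ * finRotate 5)).card = 5 := by
  decide +kernel

theorem card_pairs {G : Type*} [Group G] [Fintype G] (k : G) (P : G × G → Prop)
    [DecidablePred P] (hP : ∀ p, P p → p.1 * p.2 = k) :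
    Fintype.card {p // P p} = (Finset.univ.filter fun s : G => P (s, s⁻¹ * k)).card := by
  rw [← Fintype.card_subtype]
  refine Fintype.card_congr
    { toFun := fun p => ⟨p.1.1, ?_⟩
      invFun := fun s => ⟨(s.1, s.1⁻¹ * k), s.2⟩
      left_inv := ?_
      right_inv := fun _ => rfl }
  · rw [← eq_inv_mul_of_mul_eq (hP _ p.2)]
    exact p.2
  · rintro ⟨⟨a, b⟩, h⟩
    have hb : b = a⁻¹ * k := eq_inv_mul_of_mul_eq (hP _ h)
    subst hb
    rfl

theorem good_count : Fintype.card {p // GoodPair p} = 5 :=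
  (card_pairs (finRotate 5) GoodPair fun _ h => h.1).trans good_count_first

/-- The number of triples (σ₁, σ₂, q), where σ₁σ₂ = (1,2,3,4,5), both σ₁ and σ₂ have
exactly 2 cycles, q is a bijection from the cycles of σ₁ to the multiset {2,2} (two labels,
both equal to 2), and each cycle c of σ₁ intersects nontrivially at least q(c) = 2 cycles
of σ₂, equals 10. -/
theorem count_triples_S5 :
    Fintype.card
      {t : Σ p : Equiv.Perm (Fin 5) × Equiv.Perm (Fin 5),
            {c // c ∈ cyclesOf p.1} ≃ Fin 2 //
        t.1.1 * t.1.2 = finRotate 5 ∧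
        cycleCount t.1.1 = 2 ∧ cycleCount t.1.2 = 2 ∧
        ∀ c, ∀ hc : c ∈ cyclesOf t.1.1,
          (fun _ : Fin 2 => 2) (t.2 ⟨c, hc⟩) ≤
            ((cyclesOf t.1.2).filter fun c' => (c ∩ c').Nonempty).card} = 10 := by
  have e : {t : Σ p : Equiv.Perm (Fin 5) × Equiv.Perm (Fin 5),
            {c // c ∈ cyclesOf p.1} ≃ Fin 2 //
        t.1.1 * t.1.2 = finRotate 5 ∧
        cycleCount t.1.1 = 2 ∧ cycleCount t.1.2 = 2 ∧
        ∀ c, ∀ hc : c ∈ cyclesOf t.1.1,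
          (fun _ : Fin 2 => 2) (t.2 ⟨c, hc⟩) ≤
            ((cyclesOf t.1.2).filter fun c' => (c ∩ c').Nonempty).card} ≃
      Σ p : {p // GoodPair p}, ({c // c ∈ cyclesOf p.1.1} ≃ Fin 2) :=
    { toFun := fun t => ⟨⟨t.1.1, t.2⟩, t.1.2⟩
      invFun := fun t => ⟨⟨t.1.1, t.2⟩, t.1.2⟩
      left_inv := fun _ => rfl
      right_inv := fun _ => rfl }
  rw [Fintype.card_congr e, Fintype.card_sigma]
  have h2 : ∀ p : {p // GoodPair p},
      Fintype.card ({c // c ∈ cyclesOf p.1.1} ≃ Fin 2) = 2 := by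
    intro p
    have hc : Fintype.card {c // c ∈ cyclesOf p.1.1} = 2 := by
      rw [Fintype.card_coe]; exact p.2.2.1
    rw [Fintype.card_equiv (Fintype.equivFinOfCardEq hc), hc]
    rfl
  rw [Finset.sum_congr rfl fun p _ => h2 p, Finset.sum_const, Finset.card_univ, good_count]
  norm_num
end
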